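/- For every pair of nonnegative integers (a,b), not both zero, the lower Christoffel word w_{a,b} is balanced, and every balanced binary word u with Parikh vector (a,b) satisfies w_{a,b} ≤ u in the lexicographic order induced by 0 < 1; that is, w_{a,b} is the lexicographically smallest balanced word with Parikh vector (a,b). -/

import Mathlib

/-- The lower Christoffel word `w_{a,b}`: the binary word of length `a+b` whose
`k`-th letter (1-based) is `⌊kb/(a+b)⌋ - ⌊(k-1)b/(a+b)⌋` (with `false = 0`, `true = 1`). -/
def lowerChristoffel (a b : ℕ) : List Bool :=
  (List.range (a + b)).map fun i => decide ((i + 1) * b / (a + b) ≠ i * b / (a + b))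

/-- The upper Christoffel word `W_{a,b}`: the binary word of length `a+b` whose
`k`-th letter is `⌈kb/(a+b)⌉ - ⌈(k-1)b/(a+b)⌉`. -/
def upperChristoffel (a b : ℕ) : List Bool :=
  (List.range (a + b)).map fun i =>
    decide (((i + 1) * b + (a + b) - 1) / (a + b) ≠ (i * b + (a + b) - 1) / (a + b))

/-- `p` is a period of `w`: `p` is positive and `w_i = w_{i+p}` for all valid indices. -/
def HasPeriod (w : List Bool) (p : ℕ) : Prop :=
  0 < p ∧ ∀ i, i + p < w.length → w.getD i false = w.getD (i + p) false

/-- A central word: a binary word with two coprime periods `p`, `q` and length `p + q - 2`. -/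
def IsCentral (w : List Bool) : Prop :=
  ∃ p q : ℕ, Nat.Coprime p q ∧ HasPeriod w p ∧ HasPeriod w q ∧ w.length + 2 = p + q

/-- A binary word is balanced if any two factors of the same length have numbers of `1`s
differing by at most `1`. -/
def BalancedWord (w : List Bool) : Prop :=
  ∀ u v : List Bool, u <:+: w → v <:+: w → u.length = v.length →
    |(u.count true : ℤ) - (v.count true : ℤ)| ≤ 1

/-- `w^m`: the `m`-th power of the word `w`. -/
def wpow (w : List Bool) (m : ℕ) : List Bool := (List.replicate m w).flatten

/-- A word is primitive if it is not a proper power. -/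
def IsPrimitiveWord (w : List Bool) : Prop := ¬ ∃ (v : List Bool) (m : ℕ), 2 ≤ m ∧ w = wpow v m

/-- A Lyndon word: a nonempty primitive word lexicographically strictly smaller than all
of its proper nonempty suffixes (for the order `0 < 1`, i.e. `false < true`). -/
def IsLyndonWord (w : List Bool) : Prop :=
  w ≠ [] ∧ IsPrimitiveWord w ∧
    ∀ u v : List Bool, w = u ++ v → u ≠ [] → v ≠ [] → List.Lex (· < ·) w v

/-- `p` is the minimal period of `w`. -/
def IsMinPeriod (w : List Bool) (p : ℕ) : Prop :=
  HasPeriod w p ∧ ∀ q : ℕ, HasPeriod w q → p ≤ q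

/-- `u` is a factor of the infinite periodic word `w^ω`. -/
def IsOmegaFactor (u w : List Bool) : Prop := ∃ m : ℕ, u <:+: wpow w m

/-- A primitive Christoffel word: a lower or upper Christoffel word `w_{a,b}` with
`gcd(a,b) = 1`. -/
def IsPrimitiveChristoffel (c : List Bool) : Prop :=
  ∃ a b : ℕ, Nat.Coprime a b ∧ (c = lowerChristoffel a b ∨ c = upperChristoffel a b)

/-!
Write `|x|₁` for the number of `1`s in `x`. In a balanced word the densities of `1`s in two nonempty
factors `x`, `y` differ by less than `1 / |x| + 1 / |y|`; this follows by a Euclidean descent on the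
lengths (Lothaire, *Algebraic Combinatorics on Words*, Proposition 2.1.10). Applied to the two
parts of a factorization `u = p ++ v`, it becomes exactly `|p| * |u|₁ < |u| * (|p|₁ + 1)`, that is
`⌊|p| * |u|₁ / |u|⌋ ≤ |p|₁`. The left side is the number of `1`s in the prefix of length `|p|` of
the lower Christoffel word with the Parikh vector of `u`, so this word has at most as many `1`s in
each of its prefixes as `u` has, and hence is lexicographically at most `u`.
-/

lemma le_of_count_true_take_le {x y : List Bool} (hlen : x.length ≤ y.length)
    (h : ∀ k ≤ x.length, (x.take k).count true ≤ (y.take k).count true) : x ≤ y := by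
  induction x generalizing y with
  | nil => exact not_lt.1 List.not_lex_nil
  | cons c x ih =>
    obtain _ | ⟨d, y⟩ := y
    · simp at hlen
    have hcd : c ≤ d := by
      have h_one := h 1 (by simp)
      revert h_one
      cases c <;> cases d <;> simp
    obtain hlt | rfl := hcd.lt_or_eq
    · exact le_of_lt (List.Lex.rel hlt)
    · refine List.cons_le_cons c (ih (Nat.le_of_succ_le_succ hlen) fun k hk => ?_)
      simpa [List.count_cons] using h (k + 1) (Nat.succ_le_succ hk)

lemma add_count_true_map_range_decide_ne {f : ℕ → ℕ} (hmono : ∀ i, f i ≤ f (i + 1))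
    (hstep : ∀ i, f (i + 1) ≤ f i + 1) (k : ℕ) :
    f 0 + ((List.range k).map fun i => decide (f (i + 1) ≠ f i)).count true = f k := by
  induction k with
  | zero => simp
  | succ k ih =>
    rw [List.range_succ, List.map_append, List.count_append, ← add_assoc, ih]
    have := hmono k
    have := hstep k
    by_cases h : f (k + 1) = f k
    · simp [h]
    · simp only [List.map_cons, List.map_nil, ne_eq, h, not_false_eq_true, decide_true,
        List.count_cons_self, List.count_nil]
      omega

@[simp]
lemma length_lowerChristoffel (a b : ℕ) : (lowerChristoffel a b).length = a + b := by
  simp [lowerChristoffel]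

lemma count_true_take_lowerChristoffel {a b k : ℕ} (hk : k ≤ a + b) :
    ((lowerChristoffel a b).take k).count true = k * b / (a + b) := by
  have hmono (i : ℕ) : i * b / (a + b) ≤ (i + 1) * b / (a + b) := by
    gcongr
    exact i.le_succ
  have hstep (i : ℕ) : (i + 1) * b / (a + b) ≤ i * b / (a + b) + 1 := by
    obtain hn | hn := (a + b).eq_zero_or_pos
    · simp [hn]
    · rw [← Nat.add_div_right _ hn, add_one_mul]
      gcongr
      exact b.le_add_left a
  simpa [lowerChristoffel, ← List.map_take, List.take_range, hk] using
    add_count_true_map_range_decide_ne hmono hstep k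

lemma count_true_mem_Icc_of_infix_lowerChristoffel {a b : ℕ} {x : List Bool}
    (hx : x <:+: lowerChristoffel a b) :
    x.count true ∈ Set.Icc (x.length * b / (a + b)) (x.length * b / (a + b) + 1) := by
  have count_prefix {p : List Bool} (hp : p <+: lowerChristoffel a b) :
      p.count true = p.length * b / (a + b) := by
    have hlen : p.length ≤ a + b := by simpa using hp.length_le
    rw [← count_true_take_lowerChristoffel hlen, ← List.prefix_iff_eq_take.1 hp]
  obtain ⟨p, s, hw⟩ := hx
  have hp := count_prefix (p := p) ⟨x ++ s, by rw [← hw, List.append_assoc]⟩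
  have hpx := count_prefix ⟨s, hw⟩
  rw [List.count_append, List.length_append, add_mul] at hpx
  have hlower := Nat.div_add_div_le_add_div (x := p.length * b) (y := x.length * b) (z := a + b)
  have hupper := Nat.add_div_le_div_add_div_add_one (p.length * b) (x.length * b) (a + b)
  constructor <;> omega

theorem balancedWord_lowerChristoffel (a b : ℕ) : BalancedWord (lowerChristoffel a b) := by
  intro x y hx hy hlen
  have hx := count_true_mem_Icc_of_infix_lowerChristoffel hx
  have hy := count_true_mem_Icc_of_infix_lowerChristoffel hy
  rw [← hlen] at hy
  rw [Set.mem_Icc] at hx hy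
  rw [abs_le]
  omega

namespace BalancedWord

variable {u : List Bool}

lemma count_true_le_add_one (hu : BalancedWord u) {x y : List Bool} (hx : x <:+: u) (hy : y <:+: u)
    (hlen : x.length = y.length) : x.count true ≤ y.count true + 1 := by
  have := (abs_le.1 (hu x y hx hy hlen)).2
  omega

-- The inequality is `|x|₁ / |x| - |y|₁ / |y| < 1 / |x| + 1 / |y|` with the denominators cleared.
theorem length_mul_count_true_lt (hu : BalancedWord u) {x y : List Bool} (hx : x <:+: u)
    (hy : y <:+: u) (hxy : x ≠ [] ∨ y ≠ []) :
    y.length * x.count true < x.length * y.count true + x.length + y.length := by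
  induction hn : x.length + y.length using Nat.strong_induction_on generalizing x y with
  | _ n ih =>
  obtain rfl | hx0 := eq_or_ne x []
  · simpa [List.length_pos_iff] using hxy
  obtain rfl | hy0 := eq_or_ne y []
  · simpa [List.length_pos_iff] using hx0
  have hxpos := List.length_pos_iff.2 hx0
  have hypos := List.length_pos_iff.2 hy0
  obtain hle | hle := le_total y.length x.length
  · obtain ⟨z, t, rfl, hz⟩ : ∃ z t, x = z ++ t ∧ z.length = y.length :=
      ⟨_, _, (List.take_append_drop y.length x).symm, by simpa⟩
    have hbal : z.count true ≤ y.count true + 1 :=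
      hu.count_true_le_add_one ((List.prefix_append z t).isInfix.trans hx) hy hz
    have hrec := ih (t.length + y.length) (by grind) ((List.suffix_append z t).isInfix.trans hx) hy
      (.inr hy0) rfl
    simp only [List.length_append, List.count_append, hz]
    linarith [Nat.mul_le_mul_left y.length hbal]
  · obtain ⟨z, t, rfl, hz⟩ : ∃ z t, y = z ++ t ∧ z.length = x.length :=
      ⟨_, _, (List.take_append_drop x.length y).symm, by simpa⟩
    have hbal : x.count true ≤ z.count true + 1 :=
      hu.count_true_le_add_one hx ((List.prefix_append z t).isInfix.trans hy) hz.symm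
    have hrec := ih (x.length + t.length) (by grind) hx ((List.suffix_append z t).isInfix.trans hy)
      (.inl hx0) rfl
    simp only [List.length_append, List.count_append, hz]
    linarith [Nat.mul_le_mul_left x.length hbal]

theorem length_mul_count_true_div_le_of_prefix (hu : BalancedWord u) {p : List Bool}
    (hp : p <+: u) : p.length * u.count true / u.length ≤ p.count true := by
  obtain rfl | hp0 := eq_or_ne p []
  · simp
  obtain ⟨v, rfl⟩ := hp
  refine Nat.le_of_lt_succ (Nat.div_lt_of_lt_mul ?_)
  have hdensity : p.length * v.count true < v.length * p.count true + v.length + p.length :=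
    hu.length_mul_count_true_lt (List.suffix_append p v).isInfix (List.prefix_append p v).isInfix
      (.inr hp0)
  rw [List.length_append, List.count_append]
  linarith

theorem lowerChristoffel_le (hu : BalancedWord u) :
    lowerChristoffel (u.count false) (u.count true) ≤ u := by
  have hlen : u.count false + u.count true = u.length := u.count_false_add_count_true
  refine le_of_count_true_take_le (by simp [hlen]) fun k hk => ?_
  rw [length_lowerChristoffel] at hk
  have hprefix := hu.length_mul_count_true_div_le_of_prefix (u.take_prefix k)
  rwa [List.length_take_of_le (hk.trans_eq hlen), ← hlen,
    ← count_true_take_lowerChristoffel hk] at hprefix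

end BalancedWord

/-- For every `(a,b)` not both zero, `w_{a,b}` is the lexicographically
smallest balanced word with Parikh vector `(a,b)`. -/
theorem stmt8 (a b : ℕ) (hab : a ≠ 0 ∨ b ≠ 0) :
    BalancedWord (lowerChristoffel a b) ∧
    ∀ u : List Bool, BalancedWord u → u.count false = a → u.count true = b →
      lowerChristoffel a b = u ∨ List.Lex (· < ·) (lowerChristoffel a b) u := by
  refine ⟨balancedWord_lowerChristoffel a b, ?_⟩
  rintro u hu rfl rfl
  exact hu.lowerChristoffel_le.eq_or_lt
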